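/- arXiv:2204.04496 — 5 statements merged into one kernel-verified Lean document; each statement's English description precedes it below -/
import Mathlib

section
/- Suppose x* is a minimizer of the linear program min { ⟨p(x*), X⟩ : (I − A)X ≥ c(λ*) componentwise, BX ≤ r(v*) componentwise, X ∈ ℝ₊ⁿ } and (λ*, v*) is a maximizer of the dual linear program max { ⟨c(λ*), Λ⟩ − ⟨r(v*), V⟩ : (I − A)ᵀΛ − BᵀV ≤ p(x*) componentwise, Λ ∈ ℝ₊ⁿ, V ∈ ℝ₊ᵐ }. Then y* = (x*, λ*, v*) solves the variational inequality: ⟨g(y*), y − y*⟩ ≤ 0 for all y ∈ Ω. -/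
open Matrix Filter
open scoped BigOperators

noncomputable section

/-- Vectors in ℝ^k. -/
abbrev Vec (k : ℕ) := Fin k → ℝ

/-- Standard Euclidean inner product on ℝ^k. -/
def ip {k : ℕ} (u v : Vec k) : ℝ := ∑ i, u i * v i

/-- Standard Euclidean norm on ℝ^k. -/
def nrm {k : ℕ} (u : Vec k) : ℝ := Real.sqrt (ip u u)

/-- The space ℝⁿ × ℝⁿ × ℝᵐ of triples y = (x, λ, v). -/
abbrev Triple (n m : ℕ) := Vec n × Vec n × Vec m

/-- Euclidean inner product on the triple space. -/
def ipT {n m : ℕ} (y z : Triple n m) : ℝ :=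
  ip y.1 z.1 + ip y.2.1 z.2.1 + ip y.2.2 z.2.2

/-- Euclidean norm on the triple space. -/
def nrmT {n m : ℕ} (y : Triple n m) : ℝ := Real.sqrt (ipT y y)

/-- Ω = ℝ₊ⁿ × ℝ₊ⁿ × ℝ₊ᵐ. -/
def Om (n m : ℕ) : Set (Triple n m) :=
  {y | (∀ j, 0 ≤ y.1 j) ∧ (∀ j, 0 ≤ y.2.1 j) ∧ (∀ i, 0 ≤ y.2.2 i)}

/-- The operator g(x, λ, v) = ((I − A)ᵀλ − p(x) − Bᵀv, c(λ) − (I − A)x, Bx − r(v)). -/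
def gOp {n m : ℕ} (A : Matrix (Fin n) (Fin n) ℝ) (B : Matrix (Fin m) (Fin n) ℝ)
    (p c : Vec n → Vec n) (r : Vec m → Vec m) (y : Triple n m) : Triple n m :=
  ((1 - A)ᵀ *ᵥ y.2.1 - p y.1 - Bᵀ *ᵥ y.2.2,
   c y.2.1 - (1 - A) *ᵥ y.1,
   B *ᵥ y.1 - r y.2.2)

/-- P_Ω : componentwise positive part (Euclidean projection onto Ω). -/
def projOm {n m : ℕ} (y : Triple n m) : Triple n m :=
  (fun j => max (y.1 j) 0, fun j => max (y.2.1 j) 0, fun i => max (y.2.2 i) 0)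

theorem farkas_aux {E ι : Type*} [AddCommGroup E] [Module ℝ E] [DecidableEq ι] (s : Finset ι) :
    ∀ (α : ι → (E →ₗ[ℝ] ℝ)) (γ : E →ₗ[ℝ] ℝ),
      (∀ x, (∀ i ∈ s, 0 ≤ α i x) → 0 ≤ γ x) →
      ∃ μ : ι → ℝ, (∀ i, 0 ≤ μ i) ∧ ∀ x, γ x = ∑ i ∈ s, μ i * α i x := by
  induction s using Finset.induction_on with
  | empty =>
    intro α γ h
    refine ⟨fun _ => 0, fun _ => le_rfl, fun x => ?_⟩
    have h1 := h x (by simp)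
    have h2 := h (-x) (by simp)
    rw [map_neg] at h2
    simp
    linarith
  | insert a s ha ih =>
    intro α γ h
    by_cases hc : ∀ x, (∀ i ∈ s, 0 ≤ α i x) → 0 ≤ γ x
    · obtain ⟨μ, hμ, he⟩ := ih α γ hc
      refine ⟨fun i => if i = a then 0 else μ i, fun i => ?_, fun x => ?_⟩
      · dsimp only
        split_ifs
        · exact le_rfl
        · exact hμ i
      · rw [Finset.sum_insert ha, he x]
        simp only [if_true, zero_mul, zero_add]
        refine Finset.sum_congr rfl fun i hi => ?_
        rw [if_neg (ne_of_mem_of_not_mem hi ha)]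
    · push Not at hc
      obtain ⟨z, hz, hzn⟩ := hc
      have haz : α a z < 0 := by
        by_contra hcon
        push Not at hcon
        have := h z (fun i hi => by
          rcases Finset.mem_insert.1 hi with e | e
          · rw [e]; exact hcon
          · exact hz i e)
        linarith
      obtain ⟨t, ht, hta⟩ : ∃ t : ℝ, 0 < t ∧ t * α a z = -1 :=
        ⟨-(α a z)⁻¹, by simpa using haz, by
          have := haz.ne
          field_simp⟩
      obtain ⟨μ, hμ, he⟩ := ih (fun i => α i + (t * α i z) • α a) (γ + (t * γ z) • α a) (by
        intro x hx
        have := h (x + (t * α a x) • z) (fun i hi => by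
          rcases Finset.mem_insert.1 hi with e | e
          · subst e
            have e2 : α i x + t * α i x * α i z = 0 := by linear_combination α i x * hta
            simp [e2]
          · have := hx i e
            simp at this ⊢
            linarith)
        simp at this ⊢
        linarith)
      refine ⟨fun i => if i = a then (∑ i ∈ s, μ i * (t * α i z)) - t * γ z else μ i,
        fun i => ?_, fun x => ?_⟩
      · dsimp only
        split_ifs
        · have h1 : 0 ≤ ∑ i ∈ s, μ i * (t * α i z) :=
            Finset.sum_nonneg fun i hi => mul_nonneg (hμ i) (mul_nonneg ht.le (hz i hi))
          nlinarith
        · exact hμ i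
      · rw [Finset.sum_insert ha]
        have e1 : ∑ i ∈ s, (if i = a then (∑ i ∈ s, μ i * (t * α i z)) - t * γ z else μ i) * α i x
            = ∑ i ∈ s, μ i * α i x := by
          refine Finset.sum_congr rfl fun i hi => ?_
          rw [if_neg (ne_of_mem_of_not_mem hi ha)]
        rw [e1]
        have e2 := he x
        simp only [LinearMap.add_apply, LinearMap.smul_apply, smul_eq_mul, mul_add,
          Finset.sum_add_distrib, ← mul_assoc, ← Finset.sum_mul] at e2
        simp only [if_true, ← mul_assoc]
        linarith

/-- Strong duality. -/
theorem strong_dual_aux {n m : ℕ} (M : Matrix (Fin n) (Fin n) ℝ) (B : Matrix (Fin m) (Fin n) ℝ)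
    (p c : Fin n → ℝ) (r : Fin m → ℝ) (xs : Fin n → ℝ)
    (h1 : ∀ j, c j ≤ (M *ᵥ xs) j) (h2 : ∀ i, (B *ᵥ xs) i ≤ r i) (h3 : ∀ j, 0 ≤ xs j)
    (hmin : ∀ X : Fin n → ℝ, (∀ j, c j ≤ (M *ᵥ X) j) → (∀ i, (B *ᵥ X) i ≤ r i) →
      (∀ j, 0 ≤ X j) → p ⬝ᵥ xs ≤ p ⬝ᵥ X) :
    ∃ (L : Fin n → ℝ) (V : Fin m → ℝ), (∀ j, (Mᵀ *ᵥ L) j - (Bᵀ *ᵥ V) j ≤ p j) ∧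
      (∀ j, 0 ≤ L j) ∧ (∀ i, 0 ≤ V i) ∧ p ⬝ᵥ xs ≤ c ⬝ᵥ L - r ⬝ᵥ V := by
  classical
  let X : ((Fin n → ℝ) × ℝ) →ₗ[ℝ] (Fin n → ℝ) := LinearMap.fst ℝ _ _
  let T : ((Fin n → ℝ) × ℝ) →ₗ[ℝ] ℝ := LinearMap.snd ℝ _ _
  let α : (Fin n ⊕ Fin m ⊕ Fin n ⊕ Unit) → (((Fin n → ℝ) × ℝ) →ₗ[ℝ] ℝ) := fun k =>
    match k with
    | .inl j => LinearMap.proj j ∘ₗ M.mulVecLin ∘ₗ X - c j • T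
    | .inr (.inl i) => r i • T - LinearMap.proj i ∘ₗ B.mulVecLin ∘ₗ X
    | .inr (.inr (.inl j)) => LinearMap.proj j ∘ₗ X
    | .inr (.inr (.inr _)) => T
  let γ : ((Fin n → ℝ) × ℝ) →ₗ[ℝ] ℝ := dotProductBilin ℝ ℝ p ∘ₗ X - (p ⬝ᵥ xs) • T
  obtain ⟨μ, hμ, he⟩ := farkas_aux Finset.univ α γ (by
    rintro ⟨x, t⟩ hx
    have a1 : ∀ j, 0 ≤ (M *ᵥ x) j - c j * t := fun j => hx (.inl j) (Finset.mem_univ _)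
    have a2 : ∀ i, 0 ≤ r i * t - (B *ᵥ x) i := fun i => hx (.inr (.inl i)) (Finset.mem_univ _)
    have a3 : ∀ j, 0 ≤ x j := fun j => hx (.inr (.inr (.inl j))) (Finset.mem_univ _)
    have a4 : 0 ≤ t := hx (.inr (.inr (.inr ()))) (Finset.mem_univ _)
    change 0 ≤ p ⬝ᵥ x - (p ⬝ᵥ xs) * t
    rcases a4.eq_or_lt with e | e
    · subst e
      have := hmin (xs + x) (fun j => by
          have := a1 j
          have := h1 j
          rw [mulVec_add, Pi.add_apply]; linarith) (fun j => by
          have := a2 j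
          have := h2 j
          rw [mulVec_add, Pi.add_apply]; linarith) (fun j => add_nonneg (h3 j) (a3 j))
      rw [dotProduct_add] at this
      linarith
    · have := hmin (t⁻¹ • x) (fun j => by
          have := a1 j
          rw [mulVec_smul, Pi.smul_apply, smul_eq_mul, inv_mul_eq_div, le_div_iff₀ e]; linarith)
          (fun j => by
          have := a2 j
          rw [mulVec_smul, Pi.smul_apply, smul_eq_mul, inv_mul_eq_div, div_le_iff₀ e]; linarith)
          (fun j => mul_nonneg (inv_nonneg.2 a4) (a3 j))
      rw [dotProduct_smul, smul_eq_mul, inv_mul_eq_div, le_div_iff₀ e] at this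
      linarith)
  have key : ∀ x t, p ⬝ᵥ x - (p ⬝ᵥ xs) * t =
      ∑ j, μ (.inl j) * ((M *ᵥ x) j - c j * t) + (∑ i, μ (.inr (.inl i)) * (r i * t - (B *ᵥ x) i) +
      (∑ j, μ (.inr (.inr (.inl j))) * x j + μ (.inr (.inr (.inr ()))) * t)) := by
    intro x t
    have := he (x, t)
    simp only [Fintype.sum_sum_type, Finset.univ_unique, Finset.sum_singleton] at this
    exact this
  refine ⟨fun j => μ (.inl j), fun i => μ (.inr (.inl i)), fun j => ?_, fun j => hμ _,
    fun i => hμ _, ?_⟩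
  · have := key (Pi.single j 1) 0
    have h5 := hμ (.inr (.inr (.inl j)))
    simp [Pi.single_apply] at this
    have e1 : (Mᵀ *ᵥ fun j => μ (.inl j)) j = ∑ k, μ (.inl k) * M k j := by
      simp [mulVec, dotProduct, mul_comm]
    have e2 : (Bᵀ *ᵥ fun i => μ (.inr (.inl i))) j = ∑ k, μ (.inr (.inl k)) * B k j := by
      simp [mulVec, dotProduct, mul_comm]
    rw [e1, e2]
    linarith
  · have := key 0 1
    have h5 := hμ (.inr (.inr (.inr ())))
    simp at this
    have e1 : (c ⬝ᵥ fun j => μ (.inl j)) = ∑ k, μ (.inl k) * c k := by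
      simp [dotProduct, mul_comm]
    have e2 : (r ⬝ᵥ fun i => μ (.inr (.inl i))) = ∑ k, μ (.inr (.inl k)) * r k := by
      simp [dotProduct, mul_comm]
    rw [e1, e2]
    linarith

/-- if x* solves the primal LP and (λ*, v*) solves the dual LP,
then y* = (x*, λ*, v*) solves the variational inequality ⟨g(y*), y − y*⟩ ≤ 0 ∀ y ∈ Ω. -/
theorem stmt0 {n m : ℕ} (hn : 0 < n) (hm : 0 < m)
    (A : Matrix (Fin n) (Fin n) ℝ) (B : Matrix (Fin m) (Fin n) ℝ)
    (p c : Vec n → Vec n) (r : Vec m → Vec m)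
    (xs lams : Vec n) (vs : Vec m)
    -- x* is feasible for the primal LP
    (hxfeas : (∀ j, c lams j ≤ ((1 - A) *ᵥ xs) j) ∧ (∀ i, (B *ᵥ xs) i ≤ r vs i) ∧
      (∀ j, 0 ≤ xs j))
    -- x* minimizes ⟨p(x*), X⟩ over the primal feasible set
    (hxmin : ∀ X : Vec n, (∀ j, c lams j ≤ ((1 - A) *ᵥ X) j) → (∀ i, (B *ᵥ X) i ≤ r vs i) →
      (∀ j, 0 ≤ X j) → ip (p xs) xs ≤ ip (p xs) X)
    -- (λ*, v*) is feasible for the dual LP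
    (hdfeas : (∀ j, ((1 - A)ᵀ *ᵥ lams) j - (Bᵀ *ᵥ vs) j ≤ p xs j) ∧
      (∀ j, 0 ≤ lams j) ∧ (∀ i, 0 ≤ vs i))
    -- (λ*, v*) maximizes ⟨c(λ*), Λ⟩ − ⟨r(v*), V⟩ over the dual feasible set
    (hdmax : ∀ (Lam : Vec n) (V : Vec m), (∀ j, ((1 - A)ᵀ *ᵥ Lam) j - (Bᵀ *ᵥ V) j ≤ p xs j) →
      (∀ j, 0 ≤ Lam j) → (∀ i, 0 ≤ V i) →
      ip (c lams) Lam - ip (r vs) V ≤ ip (c lams) lams - ip (r vs) vs) :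
    ∀ y ∈ Om n m,
      ipT (gOp A B p c r (xs, lams, vs)) (y - (xs, lams, vs)) ≤ 0 := by
  obtain ⟨f1, f2, f3⟩ := hxfeas
  obtain ⟨d1, d2, d3⟩ := hdfeas
  obtain ⟨L, V, g1, g2, g3, g4⟩ := strong_dual_aux (1 - A) B (p xs) (c lams) (r vs) xs f1 f2 f3 hxmin
  have hd : c lams ⬝ᵥ L - r vs ⬝ᵥ V ≤ c lams ⬝ᵥ lams - r vs ⬝ᵥ vs := hdmax L V g1 g2 g3
  rintro ⟨x, l, v⟩ ⟨y1, y2, y3⟩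
  change ((1 - A)ᵀ *ᵥ lams - p xs - Bᵀ *ᵥ vs) ⬝ᵥ (x - xs) + (c lams - (1 - A) *ᵥ xs) ⬝ᵥ (l - lams) +
    (B *ᵥ xs - r vs) ⬝ᵥ (v - vs) ≤ 0
  have k1 : ((1 - A)ᵀ *ᵥ lams - p xs - Bᵀ *ᵥ vs) ⬝ᵥ x ≤ 0 :=
    Finset.sum_nonpos fun j _ => mul_nonpos_of_nonpos_of_nonneg (by
      have := d1 j
      simp only [Pi.sub_apply]; linarith) (y1 j)
  have k2 : (c lams - (1 - A) *ᵥ xs) ⬝ᵥ l ≤ 0 :=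
    Finset.sum_nonpos fun j _ => mul_nonpos_of_nonpos_of_nonneg (by
      have := f1 j
      simp only [Pi.sub_apply]; linarith) (y2 j)
  have k3 : (B *ᵥ xs - r vs) ⬝ᵥ v ≤ 0 :=
    Finset.sum_nonpos fun j _ => mul_nonpos_of_nonpos_of_nonneg (by
      have := f2 j
      simp only [Pi.sub_apply]; linarith) (y3 j)
  have t1 : ((1 - A)ᵀ *ᵥ lams) ⬝ᵥ xs = ((1 - A) *ᵥ xs) ⬝ᵥ lams := by
    rw [mulVec_transpose, ← dotProduct_mulVec, dotProduct_comm]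
  have t2 : (Bᵀ *ᵥ vs) ⬝ᵥ xs = (B *ᵥ xs) ⬝ᵥ vs := by
    rw [mulVec_transpose, ← dotProduct_mulVec, dotProduct_comm]
  rw [dotProduct_sub, dotProduct_sub, dotProduct_sub]
  have q1 : ((1 - A)ᵀ *ᵥ lams - p xs - Bᵀ *ᵥ vs) ⬝ᵥ xs =
      ((1 - A) *ᵥ xs) ⬝ᵥ lams - p xs ⬝ᵥ xs - (B *ᵥ xs) ⬝ᵥ vs := by
    rw [sub_dotProduct, sub_dotProduct, t1, t2]
  have q2 := sub_dotProduct (c lams) ((1 - A) *ᵥ xs) lams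
  have q3 := sub_dotProduct (B *ᵥ xs) (r vs) vs
  linarith
end
end

section
/- Suppose y* = (x*, λ*, v*) ∈ Ω solves the variational inequality ⟨g(y*), y − y*⟩ ≤ 0 for all y ∈ Ω. Then x* is a minimizer of the linear program min { ⟨p(x*), X⟩ : (I − A)X ≥ c(λ*) componentwise, BX ≤ r(v*) componentwise, X ∈ ℝ₊ⁿ } and (λ*, v*) is a maximizer of the dual linear program max { ⟨c(λ*), Λ⟩ − ⟨r(v*), V⟩ : (I − A)ᵀΛ − BᵀV ≤ p(x*) componentwise, Λ ∈ ℝ₊ⁿ, V ∈ ℝ₊ᵐ }. -/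
open Matrix Filter
open scoped BigOperators

noncomputable section

theorem aux_cone {k : ℕ} (g x : Vec k) (hx : ∀ j, 0 ≤ x j)
    (h : ∀ y : Vec k, (∀ j, 0 ≤ y j) → g ⬝ᵥ (y - x) ≤ 0) :
    (∀ j, g j ≤ 0) ∧ g ⬝ᵥ x = 0 := by
  constructor
  · intro j
    have := h (x + Pi.single j 1) (fun i => by
      have h1 : (0 : ℝ) ≤ (Pi.single j (1:ℝ) : Vec k) i := by
        by_cases hij : i = j
        · subst hij; simp
        · simp [hij]
      have := hx i
      simp only [Pi.add_apply]; linarith)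
    simpa using this
  · have h0 := h 0 (fun _ => le_refl _)
    have h2 := h (x + x) (fun i => add_nonneg (hx i) (hx i))
    simp only [dotProduct_sub, dotProduct_add, dotProduct_zero] at h0 h2
    linarith

theorem aux_mono {k : ℕ} (u v w : Vec k) (hw : ∀ j, 0 ≤ w j) (h : ∀ j, u j ≤ v j) :
    u ⬝ᵥ w ≤ v ⬝ᵥ w :=
  Finset.sum_le_sum fun j _ => mul_le_mul_of_nonneg_right (h j) (hw j)

theorem aux_adj {k l : ℕ} (M : Matrix (Fin k) (Fin l) ℝ) (u : Vec k) (x : Vec l) :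
    (Mᵀ *ᵥ u) ⬝ᵥ x = (M *ᵥ x) ⬝ᵥ u := by
  rw [mulVec_transpose, ← dotProduct_mulVec, dotProduct_comm]

/-- if y* = (x*, λ*, v*) ∈ Ω solves the variational inequality, then x*
minimizes the primal LP and (λ*, v*) maximizes the dual LP. -/
theorem stmt1 {n m : ℕ} (hn : 0 < n) (hm : 0 < m)
    (A : Matrix (Fin n) (Fin n) ℝ) (B : Matrix (Fin m) (Fin n) ℝ)
    (p c : Vec n → Vec n) (r : Vec m → Vec m)
    (xs lams : Vec n) (vs : Vec m)
    (hOm : (xs, lams, vs) ∈ Om n m)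
    (hVI : ∀ y ∈ Om n m, ipT (gOp A B p c r (xs, lams, vs)) (y - (xs, lams, vs)) ≤ 0) :
    -- x* is feasible for the primal LP
    ((∀ j, c lams j ≤ ((1 - A) *ᵥ xs) j) ∧ (∀ i, (B *ᵥ xs) i ≤ r vs i) ∧ (∀ j, 0 ≤ xs j) ∧
    -- x* minimizes ⟨p(x*), X⟩ over the primal feasible set
     (∀ X : Vec n, (∀ j, c lams j ≤ ((1 - A) *ᵥ X) j) → (∀ i, (B *ᵥ X) i ≤ r vs i) →
      (∀ j, 0 ≤ X j) → ip (p xs) xs ≤ ip (p xs) X)) ∧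
    -- (λ*, v*) is feasible for the dual LP
    ((∀ j, ((1 - A)ᵀ *ᵥ lams) j - (Bᵀ *ᵥ vs) j ≤ p xs j) ∧
     (∀ j, 0 ≤ lams j) ∧ (∀ i, 0 ≤ vs i) ∧
    -- (λ*, v*) maximizes ⟨c(λ*), Λ⟩ − ⟨r(v*), V⟩ over the dual feasible set
     (∀ (Lam : Vec n) (V : Vec m), (∀ j, ((1 - A)ᵀ *ᵥ Lam) j - (Bᵀ *ᵥ V) j ≤ p xs j) →
      (∀ j, 0 ≤ Lam j) → (∀ i, 0 ≤ V i) →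
      ip (c lams) Lam - ip (r vs) V ≤ ip (c lams) lams - ip (r vs) vs)) := by
  obtain ⟨hx, hl, hv⟩ := hOm
  simp only at hx hl hv
  have ipd : ∀ {k : ℕ} (u v : Vec k), ip u v = u ⬝ᵥ v := fun _ _ => rfl
  simp only [ipT, gOp, ipd, Prod.fst_sub, Prod.snd_sub] at hVI
  simp only [ipd]
  generalize 1 - A = M at *
  obtain ⟨a1, b1⟩ := aux_cone (Mᵀ *ᵥ lams - p xs - Bᵀ *ᵥ vs) xs hx (fun y hy => by
    simpa using hVI (y, lams, vs) ⟨hy, hl, hv⟩)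
  obtain ⟨a2, b2⟩ := aux_cone (c lams - M *ᵥ xs) lams hl (fun y hy => by
    simpa using hVI (xs, y, vs) ⟨hx, hy, hv⟩)
  obtain ⟨a3, b3⟩ := aux_cone (B *ᵥ xs - r vs) vs hv (fun y hy => by
    simpa using hVI (xs, lams, y) ⟨hx, hl, hy⟩)
  simp only [Pi.sub_apply] at a1 a2 a3
  simp only [sub_dotProduct, aux_adj] at b1 b2 b3
  refine ⟨⟨fun j => by linarith [a2 j], fun i => by linarith [a3 i], hx, ?_⟩,
    fun j => by linarith [a1 j], hl, hv, ?_⟩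
  · intro X h1 h2 h3
    have e1 := aux_mono (Mᵀ *ᵥ lams - Bᵀ *ᵥ vs) (p xs) X h3
      (fun j => by simp only [Pi.sub_apply]; linarith [a1 j])
    have e2 := aux_mono _ _ lams hl h1
    have e3 := aux_mono _ _ vs hv h2
    simp only [sub_dotProduct, aux_adj] at e1
    linarith
  · intro L V h1 h2 h3
    have e1 := aux_mono (Mᵀ *ᵥ L - Bᵀ *ᵥ V) (p xs) xs hx h1
    have e2 := aux_mono (c lams) (M *ᵥ xs) L h2 (fun j => by linarith [a2 j])
    have e3 := aux_mono (B *ᵥ xs) (r vs) V h3 (fun j => by linarith [a3 j])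
    simp only [sub_dotProduct, aux_adj] at e1
    linarith
end
end

section
/- If y* = (x*, λ*, v*) ∈ Ω solves the variational inequality ⟨g(y*), y − y*⟩ ≤ 0 for all y ∈ Ω, then g(y*) ≤ 0 componentwise and ⟨g(y*), y*⟩ = 0; consequently the balance identity ⟨c(λ*), λ*⟩ = ⟨p(x*), x*⟩ + ⟨r(v*), v*⟩ holds (total consumption equals the sum of production and factor costs). -/
open Matrix Filter
open scoped BigOperators

noncomputable section

/-- if y* = (x*, λ*, v*) ∈ Ω solves the variational inequality, then
g(y*) ≤ 0 componentwise, ⟨g(y*), y*⟩ = 0, and ⟨c(λ*), λ*⟩ = ⟨p(x*), x*⟩ + ⟨r(v*), v*⟩. -/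
theorem stmt2 {n m : ℕ} (hn : 0 < n) (hm : 0 < m)
    (A : Matrix (Fin n) (Fin n) ℝ) (B : Matrix (Fin m) (Fin n) ℝ)
    (p c : Vec n → Vec n) (r : Vec m → Vec m)
    (xs lams : Vec n) (vs : Vec m)
    (hOm : (xs, lams, vs) ∈ Om n m)
    (hVI : ∀ y ∈ Om n m, ipT (gOp A B p c r (xs, lams, vs)) (y - (xs, lams, vs)) ≤ 0) :
    -- g(y*) ≤ 0 componentwise
    ((∀ j, (gOp A B p c r (xs, lams, vs)).1 j ≤ 0) ∧
     (∀ j, (gOp A B p c r (xs, lams, vs)).2.1 j ≤ 0) ∧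
     (∀ i, (gOp A B p c r (xs, lams, vs)).2.2 i ≤ 0)) ∧
    -- ⟨g(y*), y*⟩ = 0
    ipT (gOp A B p c r (xs, lams, vs)) (xs, lams, vs) = 0 ∧
    -- balance identity: total consumption = production cost + factor cost
    ip (c lams) lams = ip (p xs) xs + ip (r vs) vs := by
  have key : ipT (gOp A B p c r (xs, lams, vs)) (xs, lams, vs) =
      ip (c lams) lams - ip (p xs) xs - ip (r vs) vs := by
    have h1 : ((1 - A)ᵀ *ᵥ lams) ⬝ᵥ xs = ((1 - A) *ᵥ xs) ⬝ᵥ lams := by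
      rw [Matrix.mulVec_transpose, ← Matrix.dotProduct_mulVec, dotProduct_comm]
    have h2 : (Bᵀ *ᵥ vs) ⬝ᵥ xs = (B *ᵥ xs) ⬝ᵥ vs := by
      rw [Matrix.mulVec_transpose, ← Matrix.dotProduct_mulVec, dotProduct_comm]
    change ((1 - A)ᵀ *ᵥ lams - p xs - Bᵀ *ᵥ vs) ⬝ᵥ xs + (c lams - (1 - A) *ᵥ xs) ⬝ᵥ lams
      + (B *ᵥ xs - r vs) ⬝ᵥ vs = c lams ⬝ᵥ lams - p xs ⬝ᵥ xs - r vs ⬝ᵥ vs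
    simp only [sub_dotProduct] at h1 ⊢
    linarith
  generalize gOp A B p c r (xs, lams, vs) = g at *
  obtain ⟨g1, g2, g3⟩ := g
  obtain ⟨hx, hl, hv⟩ := hOm
  simp only at hx hl hv
  have hz : ipT (g1, g2, g3) (xs, lams, vs) = 0 := by
    have a := hVI (0, 0, 0) ⟨fun _ => le_rfl, fun _ => le_rfl, fun _ => le_rfl⟩
    have b := hVI (xs + xs, lams + lams, vs + vs)
      ⟨fun j => add_nonneg (hx j) (hx j), fun j => add_nonneg (hl j) (hl j),
        fun j => add_nonneg (hv j) (hv j)⟩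
    simp [ipT, ip] at a b ⊢
    linarith
  have hs : ∀ k (j i : Fin k), (0 : ℝ) ≤ (Pi.single j 1 : Vec k) i := by
    intro k j i
    rw [Pi.single_apply]
    split_ifs <;> norm_num
  refine ⟨⟨fun j => ?_, fun j => ?_, fun j => ?_⟩, hz, by linarith⟩
  · have a := hVI (xs + Pi.single j 1, lams, vs)
      ⟨fun i => add_nonneg (hx i) (hs _ j i), hl, hv⟩
    simpa [ipT, ip, Pi.single_apply] using a
  · have a := hVI (xs, lams + Pi.single j 1, vs)
      ⟨hx, fun i => add_nonneg (hl i) (hs _ j i), hv⟩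
    simpa [ipT, ip, Pi.single_apply] using a
  · have a := hVI (xs, lams, vs + Pi.single j 1)
      ⟨hx, hl, fun i => add_nonneg (hv i) (hs _ j i)⟩
    simpa [ipT, ip, Pi.single_apply] using a
end
end

section
/- (Lemma 1) Suppose there exist α > 0, β > 0, γ > 0 such that ⟨p(x₁) − p(x₂), x₁ − x₂⟩ ≥ α‖x₁ − x₂‖² for all x₁, x₂ ∈ ℝ₊ⁿ, ⟨c(λ₁) − c(λ₂), λ₁ − λ₂⟩ ≤ −β‖λ₁ − λ₂‖² for all λ₁, λ₂ ∈ ℝ₊ⁿ, and ⟨r(v₁) − r(v₂), v₁ − v₂⟩ ≥ γ‖v₁ − v₂‖² for all v₁, v₂ ∈ ℝ₊ᵐ. Then with δ = min{α, β, γ} > 0, for all y₁, y₂ ∈ Ω one has ⟨g(y₁) − g(y₂), y₁ − y₂⟩ ≤ −δ‖y₁ − y₂‖². -/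
open Matrix Filter
open scoped BigOperators

noncomputable section

theorem aux_nonneg {k : ℕ} (u : Vec k) : 0 ≤ ip u u :=
  Finset.sum_nonneg fun i _ => mul_self_nonneg (u i)

theorem aux_sq {k : ℕ} (u : Vec k) : nrm u ^ 2 = ip u u :=
  Real.sq_sqrt (aux_nonneg u)

theorem aux_dot {k : ℕ} (u v : Vec k) : ip u v = u ⬝ᵥ v := rfl

theorem aux_tr {k l : ℕ} (M : Matrix (Fin k) (Fin l) ℝ) (u : Vec k) (v : Vec l) :
    (Mᵀ *ᵥ u) ⬝ᵥ v = (M *ᵥ v) ⬝ᵥ u := by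
  rw [Matrix.mulVec_transpose, ← Matrix.dotProduct_mulVec, dotProduct_comm]

/-- Lemma 1: if p, c, r are strongly monotone (increasing, decreasing,
increasing respectively) on the nonnegative orthants, then g is strongly monotone on Ω
with modulus δ = min{α, β, γ}. -/
theorem stmt4 {n m : ℕ} (hn : 0 < n) (hm : 0 < m)
    (A : Matrix (Fin n) (Fin n) ℝ) (B : Matrix (Fin m) (Fin n) ℝ)
    (p c : Vec n → Vec n) (r : Vec m → Vec m)
    (α β γ : ℝ) (hα : 0 < α) (hβ : 0 < β) (hγ : 0 < γ)
    (hp : ∀ x₁ x₂ : Vec n, (∀ j, 0 ≤ x₁ j) → (∀ j, 0 ≤ x₂ j) →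
      α * nrm (x₁ - x₂) ^ 2 ≤ ip (p x₁ - p x₂) (x₁ - x₂))
    (hc : ∀ l₁ l₂ : Vec n, (∀ j, 0 ≤ l₁ j) → (∀ j, 0 ≤ l₂ j) →
      ip (c l₁ - c l₂) (l₁ - l₂) ≤ -β * nrm (l₁ - l₂) ^ 2)
    (hr : ∀ v₁ v₂ : Vec m, (∀ i, 0 ≤ v₁ i) → (∀ i, 0 ≤ v₂ i) →
      γ * nrm (v₁ - v₂) ^ 2 ≤ ip (r v₁ - r v₂) (v₁ - v₂)) :
    ∀ y₁ ∈ Om n m, ∀ y₂ ∈ Om n m,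
      ipT (gOp A B p c r y₁ - gOp A B p c r y₂) (y₁ - y₂) ≤
        -(min α (min β γ)) * nrmT (y₁ - y₂) ^ 2 := by
  rintro ⟨x₁, l₁, v₁⟩ ⟨hx₁, hl₁, hv₁⟩ ⟨x₂, l₂, v₂⟩ ⟨hx₂, hl₂, hv₂⟩
  have h1 := hp x₁ x₂ hx₁ hx₂
  have h2 := hc l₁ l₂ hl₁ hl₂
  have h3 := hr v₁ v₂ hv₁ hv₂
  have n1 := aux_nonneg (x₁ - x₂)
  have n2 := aux_nonneg (l₁ - l₂)
  have n3 := aux_nonneg (v₁ - v₂)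
  rw [aux_sq] at h1 h2 h3
  have hT : nrmT ((x₁, l₁, v₁) - (x₂, l₂, v₂) : Triple n m) ^ 2
      = ip (x₁ - x₂) (x₁ - x₂) + ip (l₁ - l₂) (l₁ - l₂) + ip (v₁ - v₂) (v₁ - v₂) :=
    Real.sq_sqrt (add_nonneg (add_nonneg n1 n2) n3)
  have key : ipT (gOp A B p c r (x₁, l₁, v₁) - gOp A B p c r (x₂, l₂, v₂))
      ((x₁, l₁, v₁) - (x₂, l₂, v₂))
      = - ip (p x₁ - p x₂) (x₁ - x₂) + ip (c l₁ - c l₂) (l₁ - l₂)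
        - ip (r v₁ - r v₂) (v₁ - v₂) := by
    have e1 := aux_tr (1 - A) (l₁ - l₂) (x₁ - x₂)
    have e2 := aux_tr B (v₁ - v₂) (x₁ - x₂)
    simp only [ipT, gOp, aux_dot, Prod.mk_sub_mk, Matrix.mulVec_sub, sub_dotProduct] at e1 e2 ⊢
    linarith
  rw [key, hT]
  have m1 := mul_le_mul_of_nonneg_right (min_le_left α (min β γ)) n1
  have m2 := mul_le_mul_of_nonneg_right ((min_le_right α (min β γ)).trans (min_le_left β γ)) n2
  have m3 := mul_le_mul_of_nonneg_right ((min_le_right α (min β γ)).trans (min_le_right β γ)) n3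
  linarith
end
end

section
/- Suppose g is monotone in the sense ⟨g(y₁) − g(y₂), y₁ − y₂⟩ ≤ 0 for all y₁, y₂ ∈ Ω, and L-Lipschitz: ‖g(y₁) − g(y₂)‖ ≤ L‖y₁ − y₂‖ for all y₁, y₂ ∈ Ω. Let y* ∈ Ω solve the variational inequality ⟨g(y*), y − y*⟩ ≤ 0 for all y ∈ Ω, let 0 < t < (√2·L)⁻¹, and let the extra pseudo-gradient sequence be defined by ŷ_s = P_Ω(y_s + t·g(y_s)), y_{s+1} = P_Ω(y_s + t·g(ŷ_s)) from any y₀ ∈ Ω. Then the distances are non-increasing: ‖y_{s+1} − y*‖ ≤ ‖y_s − y*‖ for all s ≥ 0. -/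
open Matrix Filter
open scoped BigOperators

noncomputable section

lemma aux_scal (a u w z t : ℝ) (hz : 0 ≤ z) :
    (max (a + t * w) 0 - z) * (max (a + t * w) 0 - z)
      + (a - max (a + t * u) 0) * (a - max (a + t * u) 0)
    ≤ (a - z) * (a - z) + t ^ 2 * ((u - w) * (u - w))
      + 2 * t * (w * (max (a + t * u) 0 - z)) := by
  have key : ∀ x q : ℝ, 0 ≤ q → (x - max x 0) * (q - max x 0) ≤ 0 := by
    intro x q hq
    rcases le_total x 0 with h | h
    · rw [max_eq_right h]; nlinarith
    · rw [max_eq_left h]; simp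
  have h1 := key (a + t * w) z hz
  have h2 := key (a + t * u) (max (a + t * w) 0) (le_max_right _ _)
  generalize max (a + t * w) 0 = d at *
  generalize max (a + t * u) 0 = b at *
  nlinarith [sq_nonneg (t * (w - u) - (d - b))]

lemma aux_vec {k : ℕ} (a u w z b d : Vec k) (t : ℝ) (hz : ∀ i, 0 ≤ z i)
    (hb : ∀ i, b i = max (a i + t * u i) 0) (hd : ∀ i, d i = max (a i + t * w i) 0) :
    ip (d - z) (d - z) + ip (a - b) (a - b)
    ≤ ip (a - z) (a - z) + t ^ 2 * ip (u - w) (u - w) + 2 * t * ip w (b - z) := by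
  unfold ip
  rw [Finset.mul_sum, Finset.mul_sum, ← Finset.sum_add_distrib, ← Finset.sum_add_distrib,
    ← Finset.sum_add_distrib]
  refine Finset.sum_le_sum fun i _ => ?_
  simp only [Pi.sub_apply, hb, hd]
  exact aux_scal _ _ _ _ _ (hz i)

lemma ip_sub_left {k : ℕ} (a b z : Vec k) : ip (a - b) z = ip a z - ip b z := by
  simp [ip, sub_mul, Finset.sum_sub_distrib]

lemma ip_self_nonneg {k : ℕ} (a : Vec k) : 0 ≤ ip a a :=
  Finset.sum_nonneg fun i _ => mul_self_nonneg (a i)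

lemma ipT_self_nonneg {n m : ℕ} (a : Triple n m) : 0 ≤ ipT a a :=
  add_nonneg (add_nonneg (ip_self_nonneg _) (ip_self_nonneg _)) (ip_self_nonneg _)

lemma ipT_sub_left {n m : ℕ} (a b z : Triple n m) : ipT (a - b) z = ipT a z - ipT b z := by
  simp only [ipT, Prod.fst_sub, Prod.snd_sub, ip_sub_left]; ring

lemma projOm_mem {n m : ℕ} (a : Triple n m) : projOm a ∈ Om n m :=
  ⟨fun _ => le_max_right _ _, fun _ => le_max_right _ _, fun _ => le_max_right _ _⟩

lemma aux_triple {n m : ℕ} (a u w z : Triple n m) (t : ℝ) (hz : z ∈ Om n m) :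
    ipT (projOm (a + t • w) - z) (projOm (a + t • w) - z)
      + ipT (a - projOm (a + t • u)) (a - projOm (a + t • u))
    ≤ ipT (a - z) (a - z) + t ^ 2 * ipT (u - w) (u - w)
      + 2 * t * ipT w (projOm (a + t • u) - z) := by
  have h1 := aux_vec a.1 u.1 w.1 z.1 (projOm (a + t • u)).1 (projOm (a + t • w)).1 t hz.1
    (fun _ => rfl) (fun _ => rfl)
  have h2 := aux_vec a.2.1 u.2.1 w.2.1 z.2.1 (projOm (a + t • u)).2.1 (projOm (a + t • w)).2.1 t
    hz.2.1 (fun _ => rfl) (fun _ => rfl)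
  have h3 := aux_vec a.2.2 u.2.2 w.2.2 z.2.2 (projOm (a + t • u)).2.2 (projOm (a + t • w)).2.2 t
    hz.2.2 (fun _ => rfl) (fun _ => rfl)
  simp only [ipT, Prod.fst_sub, Prod.snd_sub]
  linarith

/-- for 0 < t < (√2·L)⁻¹ the distances of the extra pseudo-gradient
iterates to the VI solution y* are non-increasing. -/
theorem stmt14 {n m : ℕ} (hn : 0 < n) (hm : 0 < m)
    (A : Matrix (Fin n) (Fin n) ℝ) (B : Matrix (Fin m) (Fin n) ℝ)
    (p c : Vec n → Vec n) (r : Vec m → Vec m)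
    (L : ℝ)
    (hmono : ∀ y₁ ∈ Om n m, ∀ y₂ ∈ Om n m,
      ipT (gOp A B p c r y₁ - gOp A B p c r y₂) (y₁ - y₂) ≤ 0)
    (hlip : ∀ y₁ ∈ Om n m, ∀ y₂ ∈ Om n m,
      nrmT (gOp A B p c r y₁ - gOp A B p c r y₂) ≤ L * nrmT (y₁ - y₂))
    (ys : Triple n m) (hys : ys ∈ Om n m)
    (hVI : ∀ y ∈ Om n m, ipT (gOp A B p c r ys) (y - ys) ≤ 0)
    (t : ℝ) (ht0 : 0 < t) (ht1 : t < (Real.sqrt 2 * L)⁻¹)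
    (y yh : ℕ → Triple n m) (hy0 : y 0 ∈ Om n m)
    (hyh : ∀ s : ℕ, yh s = projOm (y s + t • gOp A B p c r (y s)))
    (hiter : ∀ s : ℕ, y (s + 1) = projOm (y s + t • gOp A B p c r (yh s))) :
    ∀ s : ℕ, nrmT (y (s + 1) - ys) ≤ nrmT (y s - ys) := by
  have hmem : ∀ s, y s ∈ Om n m := by
    intro s
    cases s with
    | zero => exact hy0
    | succ k => rw [hiter]; exact projOm_mem _
  intro s
  have hb : yh s ∈ Om n m := by rw [hyh]; exact projOm_mem _
  have hsL : 0 < Real.sqrt 2 * L := inv_pos.mp (ht0.trans ht1)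
  have hs2 : 0 < Real.sqrt 2 := by positivity
  have hL : 0 < L := pos_of_mul_pos_right hsL hs2.le
  have htL : t * (Real.sqrt 2 * L) < 1 := by
    have := mul_lt_mul_of_pos_right ht1 hsL
    rwa [inv_mul_cancel₀ hsL.ne'] at this
  have htL2 : t ^ 2 * L ^ 2 ≤ 1 := by
    have hpos : 0 < t * (Real.sqrt 2 * L) := by positivity
    have h1 : (t * (Real.sqrt 2 * L)) ^ 2 < 1 := by nlinarith
    have h2 : (t * (Real.sqrt 2 * L)) ^ 2 = 2 * (t ^ 2 * L ^ 2) := by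
      rw [mul_pow, mul_pow, Real.sq_sqrt (by norm_num)]; ring
    nlinarith [sq_nonneg (t * L)]
  have main := aux_triple (y s) (gOp A B p c r (y s)) (gOp A B p c r (yh s)) ys t hys
  rw [← hyh, ← hiter] at main
  have hm1 := hmono _ hb _ hys
  rw [ipT_sub_left] at hm1
  have hv := hVI _ hb
  have hw : ipT (gOp A B p c r (yh s)) (yh s - ys) ≤ 0 := by linarith
  have hl := hlip _ (hmem s) _ hb
  have hl2 : ipT (gOp A B p c r (y s) - gOp A B p c r (yh s))
      (gOp A B p c r (y s) - gOp A B p c r (yh s)) ≤ L ^ 2 * ipT (y s - yh s) (y s - yh s) := by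
    have := pow_le_pow_left₀ (Real.sqrt_nonneg _) hl 2
    unfold nrmT at this
    rwa [mul_pow, Real.sq_sqrt (ipT_self_nonneg _), Real.sq_sqrt (ipT_self_nonneg _)] at this
  apply Real.sqrt_le_sqrt
  have e1 := mul_le_mul_of_nonneg_left hl2 (sq_nonneg t)
  have e2 := mul_le_mul_of_nonneg_right htL2 (ipT_self_nonneg (y s - yh s))
  have e3 := mul_nonneg ht0.le (neg_nonneg.mpr hw)
  nlinarith
end
end
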